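/- Let 0<s<1 and 1≤p<∞ satisfy sp ≥ 1, and let m ≥ 1. Let (Ñ, d_Ñ) and (N, d_N) be metric spaces with Ñ connected, and let π : Ñ → N be a topological covering map which is nonexpansive and an isometry at scale ρ>0 (d_N(π(a),π(b)) ≤ d_Ñ(a,b) for all a,b, with equality whenever d_Ñ(a,b) ≤ ρ). Assume some fiber of π is at most countable, every deck transformation (homeomorphism τ : Ñ → Ñ with π ∘ τ = π) is an isometry, and the covering is normal (for all a,b ∈ Ñ with π(a)=π(b) there is a deck transformation sending a to b). Let Ω ⊆ ℝ^m be a connected open set and let ũ : Ω → Ñ be a Borel measurable map in W^{s,p}_loc(Ω, Ñ) with ∫_Ω∫_Ω d_Ñ(ũ(x),ũ(y))^p/|x-y|^{m+sp} dx dy = ∞. Then there is no Borel measurable map ṽ : Ω → Ñ with ∫_Ω∫_Ω d_Ñ(ṽ(x),ṽ(y))^p/|x-y|^{m+sp} dx dy < ∞ and π ∘ ṽ = π ∘ ũ almost everywhere on Ω. -/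

import Mathlib

open MeasureTheory Set ENNReal

/-- The Gagliardo `W^{s,p}` double integral of a map `w : ℝ^m → X` on a set `A`. -/
noncomputable def gagliardoIntegral {m : ℕ} {X : Type*} [PseudoEMetricSpace X] (s p : ℝ)
    (A : Set (EuclideanSpace ℝ (Fin m))) (w : EuclideanSpace ℝ (Fin m) → X) : ℝ≥0∞ :=
  ∫⁻ x in A, ∫⁻ y in A, edist (w x) (w y) ^ p / edist x y ^ ((m : ℝ) + s * p)

/-- `w ∈ W^{s,p}_loc(Ω, X)`: every point of `Ω` has an open neighborhood in `Ω` on which the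
Gagliardo double integral is finite. -/
def MemWsplocOn {m : ℕ} {X : Type*} [PseudoEMetricSpace X] (s p : ℝ)
    (Ω : Set (EuclideanSpace ℝ (Fin m))) (w : EuclideanSpace ℝ (Fin m) → X) : Prop :=
  ∀ x ∈ Ω, ∃ U : Set (EuclideanSpace ℝ (Fin m)),
    IsOpen U ∧ x ∈ U ∧ U ⊆ Ω ∧ gagliardoIntegral s p U w < ∞

/-!
Suppose `ṽ` is such a lift. The pair `(ũ, ṽ)` is again locally of finite energy, and for a fixed
deck transformation `τ` its values at points where `τ ∘ ũ = ṽ` stay at distance at least `ρ / 2`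
from its values at points where `τ ∘ ũ ≠ ṽ`. When `sp ≥ 1` this forces `{τ ∘ ũ = ṽ}` to be null or
conull on `Ω`. Indeed, let `A ∪ B` be convex and let `c h` be the measure of the set of `x ∈ A` with
`x + h ∈ B`. Inspecting the midpoint of the segment from `x` to `x + 2h` gives `c (2h) ≤ 2 c h`, so
`F h = c h / |h| ^ (m + sp)` satisfies `2 ^ m F (2h) ≤ F h`: the integral of `F` over an arbitrarily
small ball bounds its integral over the whole space. Hence if `F` is integrable then it vanishes
almost everywhere, and one of `A` and `B` is null. Since some `τ` satisfies `τ ∘ ũ = ṽ` on a set of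
positive measure, that `τ` does so almost everywhere, and `ũ` has the same energy as `ṽ`.
-/

section HaarMeasure

open Metric Module Filter
open scoped Topology

variable {E : Type*} [NormedAddCommGroup E] [NormedSpace ℝ E] [FiniteDimensional ℝ E]
  [MeasurableSpace E] [BorelSpace E] {μ : Measure E} [μ.IsAddHaarMeasure]

theorem lintegral_comp_smul_addHaar (f : E → ℝ≥0∞) {r : ℝ} (hr : r ≠ 0) :
    ∫⁻ h, f (r • h) ∂μ = ENNReal.ofReal |(r ^ finrank ℝ E)⁻¹| * ∫⁻ h, f h ∂μ := by
  rw [← smul_eq_mul, ← lintegral_smul_measure, ← Measure.map_addHaar_smul μ hr]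
  exact (lintegral_map_equiv f (Homeomorph.smulOfNeZero r hr).toMeasurableEquiv).symm

theorem two_pow_mul_lintegral_comp_two_smul (f : E → ℝ≥0∞) :
    2 ^ finrank ℝ E * ∫⁻ h, f ((2 : ℝ) • h) ∂μ = ∫⁻ h, f h ∂μ := by
  have hpow : ENNReal.ofReal |((2 : ℝ) ^ finrank ℝ E)⁻¹| = (2 ^ finrank ℝ E)⁻¹ := by
    rw [abs_of_pos (by positivity), ENNReal.ofReal_inv_of_pos (by positivity),
      ENNReal.ofReal_pow zero_le_two, ENNReal.ofReal_ofNat]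
  rw [lintegral_comp_smul_addHaar f two_ne_zero, hpow, ← mul_assoc,
    ENNReal.mul_inv_cancel (by simp) (by finiteness), one_mul]

variable {F : E → ℝ≥0∞}

theorem setLIntegral_ball_two_mul_le (hF : ∀ h, 2 ^ finrank ℝ E * F ((2 : ℝ) • h) ≤ F h) (r : ℝ) :
    ∫⁻ h in ball 0 (2 * r), F h ∂μ ≤ ∫⁻ h in ball 0 r, F h ∂μ := by
  have mem_ball_two_mul (h : E) : (2 : ℝ) • h ∈ ball (0 : E) (2 * r) ↔ h ∈ ball (0 : E) r := by
    simp [norm_smul]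
  rw [← lintegral_indicator measurableSet_ball, ← lintegral_indicator measurableSet_ball,
    ← two_pow_mul_lintegral_comp_two_smul, ← lintegral_const_mul' _ _ (by finiteness)]
  refine lintegral_mono fun h ↦ ?_
  by_cases hh : h ∈ ball (0 : E) r
  · simpa only [indicator_of_mem hh, indicator_of_mem ((mem_ball_two_mul h).2 hh)] using hF h
  · simp only [indicator_of_notMem (mt (mem_ball_two_mul h).1 hh), mul_zero, zero_le]

theorem lintegral_le_setLIntegral_ball (hF : ∀ h, 2 ^ finrank ℝ E * F ((2 : ℝ) • h) ≤ F h)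
    {r : ℝ} (hr : 0 < r) : ∫⁻ h, F h ∂μ ≤ ∫⁻ h in ball 0 r, F h ∂μ := by
  have hmono : Monotone fun n : ℕ ↦ ball (0 : E) (2 ^ n * r) := fun _ _ hnk ↦
    ball_subset_ball (by gcongr; norm_num)
  have hunion : ⋃ n : ℕ, ball (0 : E) (2 ^ n * r) = univ := by
    refine iUnion_eq_univ_iff.2 fun x ↦ ?_
    obtain ⟨n, hn⟩ := pow_unbounded_of_one_lt (‖x‖ / r) one_lt_two
    exact ⟨n, mem_ball_zero_iff.2 ((div_lt_iff₀ hr).1 hn)⟩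
  rw [← setLIntegral_univ, ← hunion, setLIntegral_iUnion_of_directed _ hmono.directed_le]
  refine iSup_le fun n ↦ ?_
  induction n with
  | zero => simp
  | succ n ih =>
    rw [pow_succ', mul_assoc]
    exact (setLIntegral_ball_two_mul_le hF _).trans ih

variable [Nontrivial E]

theorem ae_eq_zero_of_two_pow_mul_le (hFm : AEMeasurable F μ)
    (hF : ∀ h, 2 ^ finrank ℝ E * F ((2 : ℝ) • h) ≤ F h) {R : ℝ} (hR : 0 < R)
    (hfin : ∫⁻ h in ball 0 R, F h ∂μ < ∞) : F =ᵐ[μ] 0 := by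
  have hvol : Tendsto (fun r ↦ μ (ball 0 r)) (𝓝[>] 0) (𝓝 0) := by
    have := tendsto_measure_thickening_of_isClosed (μ := μ) (s := {(0 : E)})
      ⟨1, one_pos, by rw [thickening_singleton]; exact measure_ball_lt_top.ne⟩ isClosed_singleton
    simpa only [thickening_singleton, measure_singleton] using this
  have hlim := tendsto_setLIntegral_zero
    ((lintegral_le_setLIntegral_ball hF hR).trans_lt hfin).ne hvol
  refine (lintegral_eq_zero_iff' hFm).1 (le_antisymm (ge_of_tendsto hlim ?_) zero_le)
  filter_upwards [self_mem_nhdsWithin] with r hr using lintegral_le_setLIntegral_ball hF hr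

theorem ae_eq_zero_of_setLIntegral_div_enorm_rpow_lt_top {α : ℝ} (hα : finrank ℝ E + 1 ≤ α)
    {φ : E → ℝ≥0∞} (hφm : AEMeasurable φ μ) (hφ : ∀ h, φ ((2 : ℝ) • h) ≤ 2 * φ h)
    {R : ℝ} (hR : 0 < R) (hfin : ∫⁻ h in ball 0 R, φ h / ‖h‖ₑ ^ α ∂μ < ∞) : φ =ᵐ[μ] 0 := by
  have hα0 : 0 ≤ α := le_trans (by positivity) hα
  have hscale (h : E) :
      2 ^ finrank ℝ E * (φ ((2 : ℝ) • h) / ‖(2 : ℝ) • h‖ₑ ^ α) ≤ φ h / ‖h‖ₑ ^ α := by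
    have hpow : (2 : ℝ≥0∞) ^ finrank ℝ E * 2 ≤ 2 ^ α := by
      rw [← pow_succ, ← ENNReal.rpow_natCast]
      exact ENNReal.rpow_le_rpow_of_exponent_le one_le_two (mod_cast hα)
    have hnorm : ‖(2 : ℝ) • h‖ₑ ^ α = 2 ^ α * ‖h‖ₑ ^ α := by
      rw [enorm_smul, ENNReal.mul_rpow_of_nonneg _ _ hα0, Real.enorm_eq_ofReal zero_le_two,
        ENNReal.ofReal_ofNat]
    calc 2 ^ finrank ℝ E * (φ ((2 : ℝ) • h) / ‖(2 : ℝ) • h‖ₑ ^ α)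
        ≤ 2 ^ finrank ℝ E * (2 * φ h / (2 ^ α * ‖h‖ₑ ^ α)) := by rw [hnorm]; gcongr; exact hφ h
      _ = 2 ^ finrank ℝ E * 2 * φ h / (2 ^ α * ‖h‖ₑ ^ α) := by rw [← mul_div_assoc, mul_assoc]
      _ ≤ 2 ^ α * φ h / (2 ^ α * ‖h‖ₑ ^ α) := by gcongr
      _ = φ h / ‖h‖ₑ ^ α := ENNReal.mul_div_mul_left _ _ (by simp) (by finiteness)
  have hzero := ae_eq_zero_of_two_pow_mul_le (F := fun h ↦ φ h / ‖h‖ₑ ^ α)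
    (hφm.div (by fun_prop)) hscale hR hfin
  filter_upwards [hzero] with h hh
  exact (ENNReal.div_eq_zero_iff.1 hh).resolve_right (by finiteness)

theorem setLIntegral_one_div_edist_rpow_eq_top {α : ℝ} (hα : finrank ℝ E + 1 ≤ α) {x : E}
    {U : Set E} (hU : U ∈ 𝓝 x) : ∫⁻ y in U, 1 / edist x y ^ α ∂μ = ∞ := by
  obtain ⟨R, hR, hRU⟩ := Metric.mem_nhds_iff.1 hU
  have htranslate : ∫⁻ h in ball 0 R, 1 / ‖h‖ₑ ^ α ∂μ = ∫⁻ y in ball x R, 1 / edist x y ^ α ∂μ := by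
    rw [← lintegral_indicator measurableSet_ball, ← lintegral_indicator measurableSet_ball,
      ← lintegral_add_left_eq_self ((ball x R).indicator _) x]
    simp only [indicator, mem_ball, dist_zero_right, dist_self_add_left, edist_comm x,
      edist_eq_enorm_sub, add_sub_cancel_left]
  by_contra hne
  have hfin : ∫⁻ h in ball 0 R, 1 / ‖h‖ₑ ^ α ∂μ < ∞ :=
    htranslate.trans_lt ((lintegral_mono_set hRU).trans_lt (lt_top_iff_ne_top.2 hne))
  have hone := ae_eq_zero_of_setLIntegral_div_enorm_rpow_lt_top hα (φ := fun _ ↦ 1)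
    aemeasurable_const (fun _ ↦ by norm_num) hR hfin
  obtain ⟨_, h10⟩ := hone.exists
  exact one_ne_zero h10

end HaarMeasure

/-- The correlation function `h ↦ μ (A ∩ (B - h))` of two sets: the measure of the set of pairs
`(x, y) ∈ A × B` with `y - x = h`, parametrized by `x`. -/
noncomputable def correlation {G : Type*} [Add G] [MeasurableSpace G] (μ : Measure G)
    (A B : Set G) (h : G) : ℝ≥0∞ :=
  μ (A ∩ {x | x + h ∈ B})

section Correlation

variable {G : Type*} [AddCommGroup G] [MeasurableSpace G] [MeasurableAdd₂ G] {μ : Measure G}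
  {A B : Set G}

theorem measurable_correlation [SFinite μ] (hA : MeasurableSet A) (hB : MeasurableSet B) :
    Measurable (correlation μ A B) := by
  have hpairs : MeasurableSet {q : G × G | q.2 ∈ A ∧ q.2 + q.1 ∈ B} :=
    (measurable_snd hA).inter ((measurable_snd.add measurable_fst) hB)
  exact measurable_measure_prodMk_left hpairs

variable [μ.IsAddLeftInvariant]

theorem setLIntegral_setLIntegral_sub_eq [SFinite μ] (hB : MeasurableSet B)
    {k : G → ℝ≥0∞} (hk : Measurable k) :
    ∫⁻ x in A, ∫⁻ y in B, k (y - x) ∂μ ∂μ = ∫⁻ h, correlation μ A B h * k h ∂μ := by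
  have hind : Measurable fun q : G × G ↦ B.indicator (1 : G → ℝ≥0∞) (q.1 + q.2) :=
    (measurable_one.indicator hB).comp (measurable_fst.add measurable_snd)
  calc ∫⁻ x in A, ∫⁻ y in B, k (y - x) ∂μ ∂μ
      = ∫⁻ x in A, ∫⁻ h, B.indicator 1 (x + h) * k h ∂μ ∂μ := by
        refine lintegral_congr fun x ↦ ?_
        rw [← lintegral_indicator hB, ← lintegral_add_left_eq_self _ x]
        refine lintegral_congr fun h ↦ ?_
        by_cases hh : x + h ∈ B <;> simp [hh]
    _ = ∫⁻ h, ∫⁻ x in A, B.indicator 1 (x + h) * k h ∂μ ∂μ :=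
        lintegral_lintegral_swap (hind.mul (hk.comp measurable_snd)).aemeasurable
    _ = ∫⁻ h, correlation μ A B h * k h ∂μ := by
        refine lintegral_congr fun h ↦ ?_
        have hBh : MeasurableSet {x | x + h ∈ B} := (measurable_add_const h) hB
        have hslice : Measurable fun x ↦ B.indicator (1 : G → ℝ≥0∞) (x + h) :=
          hind.comp measurable_prodMk_right
        rw [lintegral_mul_const _ hslice, correlation, inter_comm, ← Measure.restrict_apply hBh,
          ← lintegral_indicator_one hBh]
        rfl

theorem correlation_add_self_le {h : G} (hAB : ∀ x ∈ A, x + h + h ∈ B → x + h ∈ A ∪ B) :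
    correlation μ A B (h + h) ≤ 2 * correlation μ A B h := by
  have hsub : A ∩ {x | x + (h + h) ∈ B} ⊆
      A ∩ {x | x + h ∈ B} ∪ (· + h) ⁻¹' (A ∩ {x | x + h ∈ B}) := by
    rintro x ⟨hxA, hxB⟩
    rw [mem_ofPred_eq, ← add_assoc] at hxB
    exact (hAB x hxA hxB).elim (fun hA ↦ Or.inr ⟨hA, hxB⟩) fun hB ↦ Or.inl ⟨hxA, hB⟩
  calc correlation μ A B (h + h)
      ≤ μ (A ∩ {x | x + h ∈ B}) + μ ((· + h) ⁻¹' (A ∩ {x | x + h ∈ B})) :=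
        (measure_mono hsub).trans (measure_union_le _ _)
    _ = 2 * correlation μ A B h := by rw [measure_preimage_add_right, two_mul, correlation]

end Correlation

section ConvexUnion

open Module

variable {E : Type*} [NormedAddCommGroup E] [NormedSpace ℝ E] [FiniteDimensional ℝ E]
  [MeasurableSpace E] [BorelSpace E] {μ : Measure E} [μ.IsAddHaarMeasure] {A B : Set E}

theorem correlation_two_smul_le (hAB : Convex ℝ (A ∪ B)) (h : E) :
    correlation μ A B ((2 : ℝ) • h) ≤ 2 * correlation μ A B h := by
  rw [two_smul]
  refine correlation_add_self_le fun x hx hy ↦ ?_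
  convert hAB.midpoint_mem (Or.inl hx) (Or.inr hy) using 1
  rw [midpoint_eq_smul_add, invOf_eq_inv]
  module

theorem measure_eq_zero_or_of_lintegral_one_div_edist_rpow_lt_top [Nontrivial E] {α : ℝ}
    (hα : finrank ℝ E + 1 ≤ α) (hA : MeasurableSet A) (hB : MeasurableSet B)
    (hAB : Convex ℝ (A ∪ B)) (hfin : ∫⁻ x in A, ∫⁻ y in B, 1 / edist x y ^ α ∂μ ∂μ < ∞) :
    μ A = 0 ∨ μ B = 0 := by
  have hint : ∫⁻ h, correlation μ A B h / ‖h‖ₑ ^ α ∂μ < ∞ := by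
    have h := setLIntegral_setLIntegral_sub_eq (μ := μ) (A := A) hB
      (k := fun h ↦ 1 / ‖h‖ₑ ^ α)
      (by fun_prop)
    simp only [mul_one_div, ← edist_eq_enorm_sub, edist_comm] at h
    exact h.symm.trans_lt hfin
  have hzero : correlation μ A B =ᵐ[μ] 0 :=
    ae_eq_zero_of_setLIntegral_div_enorm_rpow_lt_top hα (measurable_correlation hA hB).aemeasurable
      (correlation_two_smul_le hAB) one_pos ((setLIntegral_le_lintegral _ _).trans_lt hint)
  have hmul : μ B * μ A = 0 :=
    calc μ B * μ A = ∫⁻ _ in A, ∫⁻ _ in B, 1 ∂μ ∂μ := by simp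
      _ = ∫⁻ h, correlation μ A B h * 1 ∂μ :=
        setLIntegral_setLIntegral_sub_eq hB measurable_const
      _ = 0 := by simp [lintegral_congr_ae hzero]
  exact (mul_eq_zero.1 hmul).symm

end ConvexUnion

section Support

open Metric Filter TopologicalSpace
open scoped Topology

theorem isSeparable_measureSupport {X : Type*} [PseudoMetricSpace X] [MeasurableSpace X]
    [OpensMeasurableSpace X] (μ : Measure X) [SFinite μ] : IsSeparable μ.support := by
  suffices h : ∃ t ⊆ μ.support, t.Countable ∧ μ.support ⊆ closure t by
    obtain ⟨t, -, htc, ht⟩ := h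
    exact ⟨t, htc, ht⟩
  refine EMetric.subset_countable_closure_of_almost_dense_set _ fun ε hε ↦ ?_
  obtain ⟨r, hr, hrε⟩ : ∃ r : ℝ, 0 < r ∧ ENNReal.ofReal (5 * r) ≤ ε := by
    obtain ⟨δ, hδ, hδε⟩ := ENNReal.lt_iff_exists_nnreal_btwn.1 hε
    refine ⟨δ / 5, div_pos (mod_cast hδ) (by norm_num), ?_⟩
    rw [mul_div_cancel₀ _ (by norm_num), ENNReal.ofReal_coe_nnreal]
    exact hδε.le
  obtain ⟨t, hts, htd, htcov⟩ := Vitali.exists_disjoint_subfamily_covering_enlargement_closedBall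
    μ.support id (fun _ ↦ r) r (fun _ _ ↦ le_rfl) 5 (by norm_num)
  refine ⟨t, ?_, fun x hx ↦ ?_⟩
  · have hpos (c : t) : 0 < μ (closedBall (c : X) r) :=
      Measure.mem_support_iff_forall _ |>.1 (hts c.2) _ (closedBall_mem_nhds _ hr)
    have hcount := Measure.countable_meas_pos_of_disjoint_iUnion (μ := μ)
      (As := fun c : t ↦ closedBall (c : X) r) (fun _ ↦ isClosed_closedBall.measurableSet)
      fun b c hbc ↦ htd b.2 c.2 (Subtype.coe_injective.ne hbc)
    have huniv : {c : t | 0 < μ (closedBall (c : X) r)} = univ := eq_univ_of_forall hpos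
    rwa [huniv, countable_univ_iff] at hcount
  · obtain ⟨c, hct, hxc⟩ := htcov x hx
    refine mem_iUnion₂.2 ⟨c, hct, mem_closedEBall.2 ?_⟩
    rw [edist_dist]
    exact (ENNReal.ofReal_le_ofReal (hxc (mem_closedBall_self hr.le))).trans hrε

theorem exists_measure_preimage_ball_ne_zero {α X : Type*} [MeasurableSpace α]
    [PseudoMetricSpace X] {μ : Measure α} (hμ : μ ≠ 0) {w : α → X} (hw : AEStronglyMeasurable w μ)
    {ε : ℝ} (hε : 0 < ε) : ∃ c, μ (w ⁻¹' ball c ε) ≠ 0 := by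
  obtain ⟨s, ⟨t, htc, hst⟩, hws⟩ := hw.isSeparable_ae_range
  by_contra! hnull
  refine hμ (ae_eq_bot.1 (eventually_false_iff_eq_bot.1 ?_))
  filter_upwards [hws, (ae_ball_iff htc).2 fun c _ ↦ measure_eq_zero_iff_ae_notMem.1 (hnull c)]
    with x hxs hxt
  obtain ⟨c, hct, hxc⟩ := Metric.mem_closure_iff.1 (hst hxs) ε hε
  exact hxt c hct hxc

theorem measure_inter_eq_zero_or_diff_of_isPreconnected {X : Type*} [TopologicalSpace X]
    [HereditarilyLindelofSpace X] [MeasurableSpace X] {μ : Measure X} [μ.IsOpenPosMeasure]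
    {Ω A : Set X} (hΩ : IsPreconnected Ω) (hA : MeasurableSet A)
    (hloc : ∀ x ∈ Ω, ∃ U ∈ 𝓝 x, μ (U ∩ A) = 0 ∨ μ (U \ A) = 0) :
    μ (Ω ∩ A) = 0 ∨ μ (Ω \ A) = 0 := by
  set O₁ := (μ.restrict A).supportᶜ
  set O₂ := (μ.restrict Aᶜ).supportᶜ
  have hO₁ : μ (O₁ ∩ A) = 0 := by
    rw [← Measure.restrict_apply' hA, Measure.measure_compl_support]
  have hO₂ : μ (O₂ \ A) = 0 := by
    rw [sdiff_eq, ← Measure.restrict_apply' hA.compl, Measure.measure_compl_support]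
  have hcover : Ω ⊆ O₁ ∪ O₂ := by
    intro x hx
    obtain ⟨U, hU, h | h⟩ := hloc x hx
    · exact Or.inl (Measure.notMem_support_iff_exists.2
        ⟨U, hU, by rwa [Measure.restrict_apply' hA]⟩)
    · exact Or.inr (Measure.notMem_support_iff_exists.2
        ⟨U, hU, by rwa [Measure.restrict_apply' hA.compl]⟩)
  have hopen₁ : IsOpen O₁ := Measure.isOpen_compl_support
  have hopen₂ : IsOpen O₂ := Measure.isOpen_compl_support
  have hdisj : Disjoint O₁ O₂ := by
    refine disjoint_iff_inter_eq_empty.2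
      ((hopen₁.inter hopen₂).eq_empty_of_measure_zero (μ := μ) ?_)
    rw [← measure_inter_add_sdiff _ hA, add_eq_zero]
    exact ⟨measure_mono_null (by gcongr; exact inter_subset_left) hO₁,
      measure_mono_null (by gcongr; exact inter_subset_right) hO₂⟩
  refine (hΩ.subset_or_subset hopen₁ hopen₂ hdisj hcover).imp (fun h ↦ ?_) fun h ↦ ?_
  · exact measure_mono_null (by gcongr) hO₁
  · exact measure_mono_null (by gcongr) hO₂

end Support

/-- The inner integral of the Gagliardo double integral, as a function of the outer variable. -/
noncomputable def gagliardoDensity {m : ℕ} {X : Type*} [PseudoEMetricSpace X] (s p : ℝ)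
    (U : Set (EuclideanSpace ℝ (Fin m))) (w : EuclideanSpace ℝ (Fin m) → X)
    (x : EuclideanSpace ℝ (Fin m)) : ℝ≥0∞ :=
  ∫⁻ y in U, edist (w x) (w y) ^ p / edist x y ^ ((m : ℝ) + s * p)

section Gagliardo

variable {m : ℕ} {X Y : Type*} {s p : ℝ} {U V Ω : Set (EuclideanSpace ℝ (Fin m))}

section PseudoEMetricSpace

variable [PseudoEMetricSpace X] [PseudoEMetricSpace Y] {u w : EuclideanSpace ℝ (Fin m) → X}

theorem gagliardoIntegral_mono_set (hUV : U ⊆ V) :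
    gagliardoIntegral s p U w ≤ gagliardoIntegral s p V w :=
  (lintegral_mono_set hUV).trans (lintegral_mono fun _ ↦ lintegral_mono_set hUV)

theorem gagliardoIntegral_congr_ae (huw : u =ᵐ[volume.restrict U] w) :
    gagliardoIntegral s p U u = gagliardoIntegral s p U w := by
  refine lintegral_congr_ae (huw.mono fun x hx ↦ lintegral_congr_ae (huw.mono fun y hy ↦ ?_))
  simp only [hx, hy]

theorem gagliardoIntegral_isometry_comp {τ : X → Y} (hτ : Isometry τ) :
    gagliardoIntegral s p U (τ ∘ w) = gagliardoIntegral s p U w := by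
  simp only [gagliardoIntegral, Function.comp_apply, hτ.edist_eq]

theorem MemWsplocOn.of_gagliardoIntegral_lt_top (hΩ : IsOpen Ω)
    (hw : gagliardoIntegral s p Ω w < ∞) : MemWsplocOn s p Ω w :=
  fun _ hx ↦ ⟨Ω, hΩ, hx, Subset.rfl, hw⟩

theorem setLIntegral_one_div_edist_rpow_lt_top {A B : Set (EuclideanSpace ℝ (Fin m))}
    (hp : 0 ≤ p) (hAU : A ⊆ U) (hBU : B ⊆ U) (hw : gagliardoIntegral s p U w < ∞)
    {δ : ℝ≥0∞} (hδ : δ ≠ 0)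
    (hgap : ∀ᵐ x ∂volume.restrict A, ∀ᵐ y ∂volume.restrict B, δ ≤ edist (w x) (w y)) :
    ∫⁻ x in A, ∫⁻ y in B, 1 / edist x y ^ ((m : ℝ) + s * p) < ∞ := by
  have hδp : δ ^ p ≠ 0 := by simp [ENNReal.rpow_eq_zero_iff, hδ, hp.not_gt]
  refine ENNReal.lt_top_of_mul_ne_top_right (ne_top_of_le_ne_top hw.ne ?_) hδp
  calc δ ^ p * ∫⁻ x in A, ∫⁻ y in B, 1 / edist x y ^ ((m : ℝ) + s * p)
      ≤ ∫⁻ x in A, ∫⁻ y in B, δ ^ p * (1 / edist x y ^ ((m : ℝ) + s * p)) :=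
        (lintegral_const_mul_le _ _).trans (lintegral_mono fun _ ↦ lintegral_const_mul_le _ _)
    _ ≤ ∫⁻ x in A, ∫⁻ y in B, edist (w x) (w y) ^ p / edist x y ^ ((m : ℝ) + s * p) := by
        refine lintegral_mono_ae (hgap.mono fun x hx ↦ lintegral_mono_ae (hx.mono fun y hy ↦ ?_))
        rw [mul_one_div]
        gcongr
    _ ≤ gagliardoIntegral s p U w :=
        (lintegral_mono_set hAU).trans (lintegral_mono fun _ ↦ lintegral_mono_set hBU)

theorem measure_inter_eq_zero_or_diff_of_gagliardoIntegral_lt_top [NeZero m] (hp : 0 ≤ p)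
    (hsp : 1 ≤ s * p) (hU : MeasurableSet U) (hUc : Convex ℝ U)
    (hw : gagliardoIntegral s p U w < ∞) {A : Set (EuclideanSpace ℝ (Fin m))}
    (hA : MeasurableSet A) {δ : ℝ≥0∞} (hδ : δ ≠ 0)
    (hgap : ∀ᵐ x ∂volume.restrict U, ∀ᵐ y ∂volume.restrict U,
      x ∈ A → y ∉ A → δ ≤ edist (w x) (w y)) :
    volume (U ∩ A) = 0 ∨ volume (U \ A) = 0 := by
  refine measure_eq_zero_or_of_lintegral_one_div_edist_rpow_lt_top (α := m + s * p)
    (by rw [finrank_euclideanSpace_fin]; gcongr) (hU.inter hA) (hU.diff hA)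
    (by rwa [inter_union_sdiff])
    (setLIntegral_one_div_edist_rpow_lt_top hp inter_subset_left sdiff_subset hw hδ ?_)
  filter_upwards [ae_restrict_of_ae_restrict_of_subset inter_subset_left hgap,
    ae_restrict_mem (hU.inter hA)] with x hx hxA
  filter_upwards [ae_restrict_of_ae_restrict_of_subset sdiff_subset hx,
    ae_restrict_mem (hU.diff hA)] with y hy hyA using hy hxA.2 hyA.2

theorem MemWsplocOn.measure_inter_eq_zero_or_diff [NeZero m] (hp : 0 ≤ p) (hsp : 1 ≤ s * p)
    (hΩ : IsPreconnected Ω) (hw : MemWsplocOn s p Ω w) {A : Set (EuclideanSpace ℝ (Fin m))}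
    (hA : MeasurableSet A) {δ : ℝ≥0∞} (hδ : δ ≠ 0)
    (hgap : ∀ᵐ x ∂volume.restrict Ω, ∀ᵐ y ∂volume.restrict Ω,
      x ∈ A → y ∉ A → δ ≤ edist (w x) (w y)) :
    volume (Ω ∩ A) = 0 ∨ volume (Ω \ A) = 0 := by
  refine measure_inter_eq_zero_or_diff_of_isPreconnected hΩ hA fun x hx ↦ ?_
  obtain ⟨U, hUo, hxU, hUΩ, hwU⟩ := hw x hx
  obtain ⟨r, hr, hrU⟩ := Metric.isOpen_iff.1 hUo x hxU
  have hrΩ := hrU.trans hUΩ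
  exact ⟨_, Metric.ball_mem_nhds x hr, measure_inter_eq_zero_or_diff_of_gagliardoIntegral_lt_top
    hp hsp measurableSet_ball (convex_ball x r) ((gagliardoIntegral_mono_set hrU).trans_lt hwU)
    hA hδ ((ae_restrict_of_ae_restrict_of_subset hrΩ hgap).mono fun _ ↦
      ae_restrict_of_ae_restrict_of_subset hrΩ)⟩

theorem gagliardoDensity_eq_top [NeZero m] (hp : 0 ≤ p) (hsp : 1 ≤ s * p) (hU : IsOpen U)
    {x : EuclideanSpace ℝ (Fin m)} (hx : x ∈ U) {δ : ℝ≥0∞} (hδ : δ ≠ 0)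
    (hgap : ∀ᵐ y ∂volume.restrict U, δ ≤ edist (w x) (w y)) :
    gagliardoDensity s p U w x = ∞ := by
  have hδp : δ ^ p ≠ 0 := by simp [ENNReal.rpow_eq_zero_iff, hδ, hp.not_gt]
  rw [← top_le_iff]
  calc ∞ = δ ^ p * ∫⁻ y in U, 1 / edist x y ^ ((m : ℝ) + s * p) := by
        rw [setLIntegral_one_div_edist_rpow_eq_top (by rw [finrank_euclideanSpace_fin]; gcongr)
          (hU.mem_nhds hx), ENNReal.mul_top hδp]
    _ ≤ ∫⁻ y in U, δ ^ p * (1 / edist x y ^ ((m : ℝ) + s * p)) := lintegral_const_mul_le _ _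
    _ ≤ gagliardoDensity s p U w x := by
        refine lintegral_mono_ae (hgap.mono fun y hy ↦ ?_)
        rw [mul_one_div]
        gcongr

end PseudoEMetricSpace

section Measurability

variable [PseudoMetricSpace X] [PseudoMetricSpace Y] {w : EuclideanSpace ℝ (Fin m) → X}
  {u : EuclideanSpace ℝ (Fin m) → X} {v : EuclideanSpace ℝ (Fin m) → Y}

theorem aemeasurable_gagliardoDensity (hu : AEStronglyMeasurable u (volume.restrict U)) :
    AEMeasurable (gagliardoDensity s p U u) (volume.restrict U) := by
  refine AEMeasurable.lintegral_prod_right' (f := fun q : _ × _ ↦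
    edist (u q.1) (u q.2) ^ p / edist q.1 q.2 ^ ((m : ℝ) + s * p)) ?_
  exact ((hu.comp_fst.edist hu.comp_snd).pow_const p).div (by fun_prop)

theorem gagliardoIntegral_prodMk_le (hu : AEStronglyMeasurable u (volume.restrict U)) :
    gagliardoIntegral s p U (fun x ↦ (u x, v x)) ≤
      gagliardoIntegral s p U u + gagliardoIntegral s p U v := by
  have hdensity (x : EuclideanSpace ℝ (Fin m)) : gagliardoDensity s p U (fun x ↦ (u x, v x)) x ≤
      gagliardoDensity s p U u x + gagliardoDensity s p U v x := by
    have hmeas : AEMeasurable (fun y ↦ edist (u x) (u y) ^ p / edist x y ^ ((m : ℝ) + s * p))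
        (volume.restrict U) :=
      ((aestronglyMeasurable_const.edist hu).pow_const p).div (by fun_prop)
    refine (lintegral_mono fun y ↦ ?_).trans_eq (lintegral_add_left' hmeas _)
    rw [← ENNReal.add_div, Prod.edist_eq]
    gcongr
    rcases max_choice (edist (u x) (u y)) (edist (v x) (v y)) with h | h <;>
      rw [h] <;> simp
  exact (lintegral_mono hdensity).trans_eq
    (lintegral_add_left' (aemeasurable_gagliardoDensity hu) _)

theorem MemWsplocOn.prodMk (huΩ : AEStronglyMeasurable u (volume.restrict Ω))
    (hu : MemWsplocOn s p Ω u) (hv : MemWsplocOn s p Ω v) :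
    MemWsplocOn s p Ω fun x ↦ (u x, v x) := by
  intro x hx
  obtain ⟨U, hUo, hxU, hUΩ, hU⟩ := hu x hx
  obtain ⟨V, hVo, hxV, -, hV⟩ := hv x hx
  have hUVΩ : U ∩ V ⊆ Ω := inter_subset_left.trans hUΩ
  exact ⟨U ∩ V, hUo.inter hVo, ⟨hxU, hxV⟩, hUVΩ,
    (gagliardoIntegral_prodMk_le (huΩ.mono_measure (Measure.restrict_mono_set _ hUVΩ))).trans_lt
      (ENNReal.add_lt_top.2 ⟨(gagliardoIntegral_mono_set inter_subset_left).trans_lt hU,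
        (gagliardoIntegral_mono_set inter_subset_right).trans_lt hV⟩)⟩

variable [MeasurableSpace X]

theorem ae_mem_support_map_of_gagliardoIntegral_lt_top [OpensMeasurableSpace X] [NeZero m]
    (hp : 0 ≤ p) (hsp : 1 ≤ s * p) (hU : IsOpen U) (hwm : Measurable w)
    (hw : gagliardoIntegral s p U w < ∞) :
    ∀ᵐ x ∂volume.restrict U, w x ∈ ((volume.restrict U).map w).support := by
  set S : Set (EuclideanSpace ℝ (Fin m)) := {x | w x ∉ ((volume.restrict U).map w).support}
  have hS : MeasurableSet S := hwm Measure.isOpen_compl_support.measurableSet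
  have hdensity : ∀ x ∈ U ∩ S, gagliardoDensity s p U w x = ∞ := by
    rintro x ⟨hxU, hxS⟩
    obtain ⟨r, hr, hball⟩ := Metric.nhds_basis_eball.notMem_measureSupport.1 hxS
    refine gagliardoDensity_eq_top hp hsp hU hxU hr.ne' ?_
    rw [Measure.map_apply hwm Metric.isOpen_eball.measurableSet] at hball
    filter_upwards [measure_eq_zero_iff_ae_notMem.1 hball] with y hy
    simpa [edist_comm] using hy
  have hmul : ∞ * volume (U ∩ S) < ∞ :=
    calc ∞ * volume (U ∩ S) = ∫⁻ _ in U ∩ S, ∞ := by simp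
      _ = ∫⁻ x in U ∩ S, gagliardoDensity s p U w x :=
        (setLIntegral_congr_fun (hU.measurableSet.inter hS) hdensity).symm
      _ ≤ gagliardoIntegral s p U w := lintegral_mono_set inter_subset_left
      _ < ∞ := hw
  rw [ae_iff, Measure.restrict_apply hS, inter_comm]
  simpa [ENNReal.mul_lt_top_iff] using hmul

variable [BorelSpace X]

theorem aestronglyMeasurable_of_gagliardoIntegral_lt_top [NeZero m] (hp : 0 ≤ p)
    (hsp : 1 ≤ s * p) (hU : IsOpen U) (hwm : Measurable w)
    (hw : gagliardoIntegral s p U w < ∞) : AEStronglyMeasurable w (volume.restrict U) :=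
  aestronglyMeasurable_iff_aemeasurable_separable.2 ⟨hwm.aemeasurable, _,
    isSeparable_measureSupport _, ae_mem_support_map_of_gagliardoIntegral_lt_top hp hsp hU hwm hw⟩

theorem MemWsplocOn.aestronglyMeasurable [NeZero m] (hp : 0 ≤ p) (hsp : 1 ≤ s * p)
    (hwm : Measurable w) (hw : MemWsplocOn s p Ω w) :
    AEStronglyMeasurable w (volume.restrict Ω) := by
  choose! U hUo hxU _ hwU using hw
  obtain ⟨t, htΩ, htc, hΩt⟩ := TopologicalSpace.countable_cover_nhdsWithin fun x hx ↦
    mem_nhdsWithin_of_mem_nhds ((hUo x hx).mem_nhds (hxU x hx))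
  have := htc.to_subtype
  rw [biUnion_eq_iUnion] at hΩt
  refine AEStronglyMeasurable.mono_measure ?_ (Measure.restrict_mono_set _ hΩt)
  exact aestronglyMeasurable_iUnion_iff.2 fun x ↦ aestronglyMeasurable_of_gagliardoIntegral_lt_top
    hp hsp (hUo x (htΩ x.2)) hwm (hwU x (htΩ x.2))

end Measurability

end Gagliardo

section Lifting

variable {X N : Type*} [MetricSpace X] {π : X → N} {ρ : ℝ}

theorem half_le_dist_prodMk_of_ne (hinj : ∀ a b, π a = π b → dist a b ≤ ρ → a = b) {τ : X → X}
    (hτ : Isometry τ) (hτπ : ∀ x, π (τ x) = π x) {a a' b b' : X} (hb' : π b' = π a')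
    (hab : τ a = b) (hab' : τ a' ≠ b') : ρ / 2 ≤ dist (a, b) (a', b') := by
  have hρ : ρ < dist (τ a') b' :=
    not_le.1 fun h ↦ hab' (hinj _ _ ((hτπ a').trans hb'.symm) h)
  have htri : dist (τ a') b' ≤ dist a a' + dist b b' := by
    rw [← hτ.dist_eq a, hab, dist_comm b]
    exact dist_triangle _ _ _
  have hmax : dist a a' ≤ dist (a, b) (a', b') ∧ dist b b' ≤ dist (a, b) (a', b') :=
    ⟨le_max_left _ _, le_max_right _ _⟩
  linarith

theorem exists_isometry_measure_setOf_eq_ne_zero (hρ : 0 < ρ)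
    (hinj : ∀ a b, π a = π b → dist a b ≤ ρ → a = b)
    (hdeck : ∀ a b, π a = π b → ∃ τ : X → X, Isometry τ ∧ (∀ x, π (τ x) = π x) ∧ τ a = b)
    {α : Type*} [MeasurableSpace α] {μ : Measure α} (hμ : μ ≠ 0) {u v : α → X}
    (hu : AEStronglyMeasurable u μ) (hv : AEStronglyMeasurable v μ)
    (huv : ∀ᵐ x ∂μ, π (v x) = π (u x)) :
    ∃ τ : X → X, Isometry τ ∧ (∀ x, π (τ x) = π x) ∧ μ {x | τ (u x) = v x} ≠ 0 := by
  obtain ⟨⟨a, b⟩, hab⟩ := exists_measure_preimage_ball_ne_zero hμ (hu.prodMk hv)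
    (show 0 < ρ / 4 by positivity)
  obtain ⟨x₀, hx₀, hπx₀⟩ := ((frequently_ae_mem_iff.2 hab).and_eventually huv).exists
  obtain ⟨τ, hτ, hτπ, hτx₀⟩ := hdeck _ _ hπx₀.symm
  refine ⟨τ, hτ, hτπ, frequently_ae_mem_iff.1 ?_⟩
  refine ((frequently_ae_mem_iff.2 hab).and_eventually huv).mono fun x ⟨hx, hπx⟩ ↦ ?_
  by_contra hne
  have hfar := half_le_dist_prodMk_of_ne hinj hτ hτπ hπx hτx₀ hne
  have hnear : dist (u x₀, v x₀) (u x, v x) < ρ / 4 + ρ / 4 :=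
    (dist_triangle_right _ _ (a, b)).trans_lt (add_lt_add hx₀ hx)
  linarith

theorem exists_isometry_comp_ae_eq_of_memWsplocOn [MeasurableSpace X] [BorelSpace X] {m : ℕ}
    [NeZero m] {s p : ℝ} (hp : 0 ≤ p) (hsp : 1 ≤ s * p) (hρ : 0 < ρ)
    (hinj : ∀ a b, π a = π b → dist a b ≤ ρ → a = b)
    (hdeck : ∀ a b, π a = π b → ∃ τ : X → X, Isometry τ ∧ (∀ x, π (τ x) = π x) ∧ τ a = b)
    {Ω : Set (EuclideanSpace ℝ (Fin m))} (hΩo : IsOpen Ω) (hΩc : IsConnected Ω)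
    {u v : EuclideanSpace ℝ (Fin m) → X} (hum : Measurable u) (hu : MemWsplocOn s p Ω u)
    (hvm : Measurable v) (hv : MemWsplocOn s p Ω v)
    (huv : ∀ᵐ x ∂volume.restrict Ω, π (v x) = π (u x)) :
    ∃ τ : X → X, Isometry τ ∧ (∀ x, π (τ x) = π x) ∧ τ ∘ u =ᵐ[volume.restrict Ω] v := by
  have hus := hu.aestronglyMeasurable hp hsp hum
  have hvs := hv.aestronglyMeasurable hp hsp hvm
  have hμ : volume.restrict Ω ≠ 0 :=
    mt Measure.restrict_eq_zero.1 (hΩo.measure_pos volume hΩc.nonempty).ne'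
  obtain ⟨τ, hτ, hτπ, hpos⟩ :=
    exists_isometry_measure_setOf_eq_ne_zero hρ hinj hdeck hμ hus hvs huv
  refine ⟨τ, hτ, hτπ, ?_⟩
  obtain ⟨A, -, hA, hAeq⟩ := ((hτ.continuous.comp_aestronglyMeasurable hus).nullMeasurableSet_eq_fun
    hvs).exists_measurable_superset_ae_eq
  have hgap : ∀ᵐ x ∂volume.restrict Ω, ∀ᵐ y ∂volume.restrict Ω, x ∈ A → y ∉ A →
      ENNReal.ofReal (ρ / 2) ≤ edist (u x, v x) (u y, v y) := by
    filter_upwards [hAeq.mem_iff] with x hx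
    filter_upwards [hAeq.mem_iff, huv] with y hy hπy hxA hyA
    rw [edist_dist]
    exact ENNReal.ofReal_le_ofReal
      (half_le_dist_prodMk_of_ne hinj hτ hτπ hπy (hx.1 hxA) (mt hy.2 hyA))
  rcases (hu.prodMk hus hv).measure_inter_eq_zero_or_diff hp hsp hΩc.isPreconnected hA
    (ENNReal.ofReal_pos.2 (half_pos hρ)).ne' hgap with h | h
  · rw [← measure_congr hAeq, Measure.restrict_apply hA, inter_comm, h] at hpos
    exact absurd rfl hpos
  · have hmem : ∀ᵐ x ∂volume.restrict Ω, x ∈ A := by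
      rwa [ae_iff, ← compl_ofPred, ofPred_mem_eq, Measure.restrict_apply hA.compl, inter_comm]
    filter_upwards [hmem, hAeq.mem_iff] with x hxA hx using hx.1 hxA

end Lifting

theorem no_sobolev_lifting_normal_covering_general {s p : ℝ} {m : ℕ} (hp : 0 ≤ p)
    (hsp : 1 ≤ s * p) (hm : 1 ≤ m)
    {Ntl N : Type*} [MetricSpace Ntl] [MeasurableSpace Ntl] [BorelSpace Ntl]
    (π : Ntl → N) {ρ : ℝ} (hρ : 0 < ρ)
    (hinj : ∀ a b, π a = π b → dist a b ≤ ρ → a = b)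
    (hdeck : ∀ a b, π a = π b → ∃ τ : Ntl → Ntl, Isometry τ ∧ (∀ x, π (τ x) = π x) ∧ τ a = b)
    {Ω : Set (EuclideanSpace ℝ (Fin m))} (hΩo : IsOpen Ω) (hΩc : IsConnected Ω)
    {ut : EuclideanSpace ℝ (Fin m) → Ntl} (hutm : Measurable ut)
    (hutloc : MemWsplocOn s p Ω ut) (hutinf : gagliardoIntegral s p Ω ut = ∞) :
    ¬ ∃ vt : EuclideanSpace ℝ (Fin m) → Ntl, Measurable vt ∧
        gagliardoIntegral s p Ω vt < ∞ ∧
        ∀ᵐ x ∂(volume.restrict Ω), π (vt x) = π (ut x) := by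
  have : NeZero m := ⟨Nat.one_le_iff_ne_zero.1 hm⟩
  rintro ⟨vt, hvtm, hvt, hπ⟩
  obtain ⟨τ, hτ, -, hτuv⟩ := exists_isometry_comp_ae_eq_of_memWsplocOn hp hsp hρ hinj hdeck hΩo hΩc
    hutm hutloc hvtm (MemWsplocOn.of_gagliardoIntegral_lt_top hΩo hvt) hπ
  rw [← gagliardoIntegral_congr_ae hτuv, gagliardoIntegral_isometry_comp hτ, hutinf] at hvt
  exact lt_irrefl _ hvt

/-- **No Sobolev lifting from a bad lifting, for normal coverings.** For `sp ≥ 1`, let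
`π : Ñ → N` be a covering map between metric spaces, nonexpansive and an isometry at scale
`ρ > 0`, with `Ñ` connected, some fiber at most countable, all deck transformations
isometries, and the covering normal. If `Ω ⊆ ℝ^m` is a connected open set and
`ũ ∈ W^{s,p}_loc(Ω,Ñ)` is Borel measurable with infinite Gagliardo double integral on `Ω`,
then no Borel measurable `ṽ` with finite Gagliardo double integral on `Ω` satisfies
`π ∘ ṽ = π ∘ ũ` a.e. on `Ω`. -/
theorem no_sobolev_lifting_normal_covering (s p : ℝ) (m : ℕ) (hs0 : 0 < s) (hs1 : s < 1)
    (hp1 : 1 ≤ p) (hsp : 1 ≤ s * p) (hm : 1 ≤ m)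
    {Ntl N : Type*} [MetricSpace Ntl] [MetricSpace N] [ConnectedSpace Ntl]
    [MeasurableSpace Ntl] [BorelSpace Ntl]
    (π : Ntl → N) (hcov : IsCoveringMap π) (ρ : ℝ) (hρ : 0 < ρ)
    (hnonexp : ∀ a b : Ntl, dist (π a) (π b) ≤ dist a b)
    (hiso : ∀ a b : Ntl, dist a b ≤ ρ → dist (π a) (π b) = dist a b)
    (hfiber : ∃ y₀ : N, (π ⁻¹' {y₀}).Countable)
    (hdeckiso : ∀ τ : Ntl ≃ₜ Ntl, (∀ x, π (τ x) = π x) → Isometry τ)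
    (hnormal : ∀ a b : Ntl, π a = π b → ∃ τ : Ntl ≃ₜ Ntl, (∀ x, π (τ x) = π x) ∧ τ a = b)
    (Ω : Set (EuclideanSpace ℝ (Fin m))) (hΩo : IsOpen Ω) (hΩc : IsConnected Ω)
    (ut : EuclideanSpace ℝ (Fin m) → Ntl) (hutm : Measurable ut)
    (hutloc : MemWsplocOn s p Ω ut) (hutinf : gagliardoIntegral s p Ω ut = ∞) :
    ¬ ∃ vt : EuclideanSpace ℝ (Fin m) → Ntl, Measurable vt ∧
        gagliardoIntegral s p Ω vt < ∞ ∧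
        ∀ᵐ x ∂(volume.restrict Ω), π (vt x) = π (ut x) := by
  have hinj (a b : Ntl) (hab : π a = π b) (hρab : dist a b ≤ ρ) : a = b := by
    rw [← dist_eq_zero, ← hiso a b hρab, hab, dist_self]
  refine no_sobolev_lifting_normal_covering_general (by positivity) hsp hm π hρ hinj
    (fun a b hab ↦ ?_) hΩo hΩc hutm hutloc hutinf
  obtain ⟨τ, hτπ, hτab⟩ := hnormal a b hab
  exact ⟨τ, hdeckiso τ hτπ, hτπ, hτab⟩
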